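/- Reduction of the half-order fractional radiative transport equation to a first-order-in-time equation (Section 3). Let σ_t, σ_s : [0,ℓ]×V → ℝ be C¹ in x and bounded measurable in v, and let p : [0,ℓ]×V×V → ℝ be C¹ in x, bounded measurable in (v,v'), p > 0. Let F : [0,ℓ]×V×[0,T] → ℝ be C¹ in (x,t) for each v, measurable in v, with ∂_t^{1/2}F well-defined. Suppose u : [0,ℓ]×V×[0,T] → ℝ is, for each v, C² in (x,t) with bounded derivatives, measurable in v, satisfies u(x,v,0) = 0 and lim_{t→0+} ∂_t^{1/2}u(x,v,t) = 0 for all (x,v), its mixed derivative ∂ₓ∂_t u is continuous and bounded (so that ∂ₓ and ∂_t^{1/2} commute), t ↦ ∂_t^{1/2}u(x,v,t) is absolutely continuous, and u solves ∂_t^{1/2}u + v∂ₓu + σ_t(x,v)u = σ_s(x,v)∫_V p(x,v,v')u(x,v',t)dv' + F(x,v,t) on Ω×V×(0,T). Then for all (x,v,t) ∈ Ω×V×(0,T): ∂_t u = v²∂ₓ²u + L₁u + ∫_V K(x,v,v')u(x,v',t)dv' + f(x,v,t), where L₁u = 2vσ_t(x,v)∂ₓu + (v∂ₓσ_t(x,v)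 + σ_t(x,v)²)u, K(x,v,v')u(x,v',t) = −v∂ₓ(σ_s(x,v)p(x,v,v'))u(x,v',t) − σ_s(x,v)p(x,v,v')((v+v')∂ₓ + σ_t(x,v) + σ_t(x,v'))u(x,v',t) + σ_s(x,v)u(x,v',t)∫_V σ_s(x,v'')p(x,v,v'')p(x,v'',v')dv'', and f = −v∂ₓF − σ_t(x,v)F + σ_s(x,v)∫_V p(x,v,v')F(x,v',t)dv' + ∂_t^{1/2}F. -/

import Mathlib

open MeasureTheory

/-- The velocity set `V = {v : v₀ ≤ |v| ≤ v₁}`. -/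
def Vset (v₀ v₁ : ℝ) : Set ℝ := Set.Icc (-v₁) (-v₀) ∪ Set.Icc v₀ v₁

/-- The Caputo fractional derivative of half order:
`∂ₜ^{1/2} f(t) = (1/Γ(1/2)) ∫₀ᵗ f'(τ)/√(t−τ) dτ`. -/
noncomputable def caputoHalf (f : ℝ → ℝ) (t : ℝ) : ℝ :=
  (Real.Gamma (1 / 2))⁻¹ * ∫ τ in Set.Ioo 0 t, deriv f τ / Real.sqrt (t - τ)


noncomputable def Ih (T : ℝ) (h : ℝ → ℝ) (t : ℝ) : ℝ :=
  ∫ τ in Set.Ioo 0 T, h τ * (Real.sqrt (t - τ))⁻¹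

lemma w_int0 (t : ℝ) (ht : 0 < t) :
    IntegrableOn (fun τ => (Real.sqrt (t - τ))⁻¹) (Set.Ioc 0 t) ∧
    ∫ τ in (0:ℝ)..t, (Real.sqrt (t - τ))⁻¹ = 2 * Real.sqrt t := by
  have hd : ∀ τ ∈ Set.Ioo 0 t, HasDerivAt (fun τ => -2 * Real.sqrt (t - τ))
      ((Real.sqrt (t - τ))⁻¹) τ := by
    intro τ hτ
    have h1 : HasDerivAt (fun τ : ℝ => t - τ) (-1) τ := by
      simpa using (hasDerivAt_id τ).const_sub t
    have h2 := (h1.sqrt (by linarith [hτ.2])).const_mul (-2)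
    refine h2.congr_deriv ?_; symm
    have : Real.sqrt (t - τ) ≠ 0 := (Real.sqrt_pos.2 (by linarith [hτ.2])).ne'
    field_simp
  have hc : ContinuousOn (fun τ => -2 * Real.sqrt (t - τ)) (Set.Icc 0 t) := by
    apply Continuous.continuousOn; fun_prop
  have hi : IntegrableOn (fun τ => (Real.sqrt (t - τ))⁻¹) (Set.Ioc 0 t) :=
    intervalIntegral.integrableOn_deriv_of_nonneg hc hd (fun τ _ => by positivity)
  refine ⟨hi, ?_⟩
  rw [intervalIntegral.integral_eq_sub_of_hasDerivAt_of_le ht.le hc hd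
    ((intervalIntegrable_iff_integrableOn_Ioc_of_le ht.le).2 hi)]
  simp

lemma w_zero (t τ : ℝ) (h : t ≤ τ) : (Real.sqrt (t - τ))⁻¹ = 0 := by
  rw [Real.sqrt_eq_zero_of_nonpos (by linarith)]; simp

lemma Ioo_restrict (T t : ℝ) (htT : t ≤ T) (f : ℝ → ℝ) (hf : ∀ τ, t ≤ τ → f τ = 0) :
    ∫ τ in Set.Ioo 0 T, f τ = ∫ τ in Set.Ioo 0 t, f τ := by
  apply setIntegral_eq_of_subset_of_forall_sdiff_eq_zero measurableSet_Ioo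
  · exact Set.Ioo_subset_Ioo_right htT
  · intro x hx
    apply hf
    by_contra hh
    exact hx.2 ⟨hx.1.1, by linarith⟩

lemma w_int (T t : ℝ) (ht : 0 < t) :
    IntegrableOn (fun τ => (Real.sqrt (t - τ))⁻¹) (Set.Ioo 0 T) := by
  have h1 := (w_int0 t ht).1
  have : IntegrableOn (fun τ => (Real.sqrt (t - τ))⁻¹) (Set.Ioi 0) := by
    apply h1.of_forall_sdiff_eq_zero measurableSet_Ioi
    intro x hx
    apply w_zero
    by_contra hh
    exact hx.2 ⟨hx.1, by linarith⟩
  exact this.mono_set Set.Ioo_subset_Ioi_self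

lemma w_val (T t : ℝ) (ht : 0 < t) (htT : t ≤ T) :
    ∫ τ in Set.Ioo 0 T, (Real.sqrt (t - τ))⁻¹ = 2 * Real.sqrt t := by
  rw [Ioo_restrict T t htT _ (fun τ h => w_zero t τ h), ← (w_int0 t ht).2,
    intervalIntegral.integral_of_le ht.le, integral_Ioc_eq_integral_Ioo]

lemma caputo_eq (T t : ℝ) (htT : t ≤ T) (f : ℝ → ℝ) :
    caputoHalf f t = (Real.Gamma (1 / 2))⁻¹ * Ih T (deriv f) t := by
  unfold caputoHalf Ih
  rw [Ioo_restrict T t htT _ (fun τ h => by rw [w_zero t τ h, mul_zero])]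
  simp only [div_eq_mul_inv]

lemma ker_int (T t τ : ℝ) (hτ : 0 < τ) (hτt : τ < t) (htT : t ≤ T) :
    IntegrableOn (fun s => (Real.sqrt (s - τ))⁻¹ * (Real.sqrt (t - s))⁻¹) (Set.Ioo 0 T) ∧
    ∫ s in Set.Ioo 0 T, (Real.sqrt (s - τ))⁻¹ * (Real.sqrt (t - s))⁻¹ = Real.pi := by
  have hz : ∀ s, s ∉ Set.Ioo τ t → (Real.sqrt (s - τ))⁻¹ * (Real.sqrt (t - s))⁻¹ = 0 := by
    intro s hs
    by_cases h : τ < s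
    · rw [w_zero t s (by by_contra hh; exact hs ⟨h, by linarith⟩), mul_zero]
    · rw [w_zero s τ (by linarith), zero_mul]
  have hd : ∀ s ∈ Set.Ioo τ t, HasDerivAt (fun s => Real.arcsin (2 * (s - τ) / (t - τ) - 1))
      ((Real.sqrt (s - τ))⁻¹ * (Real.sqrt (t - s))⁻¹) s := by
    intro s hs
    have htt : 0 < t - τ := by linarith
    have h1 : HasDerivAt (fun s : ℝ => 2 * (s - τ) / (t - τ) - 1) (2 / (t - τ)) s := by
      have := ((((hasDerivAt_id s).sub_const τ).const_mul 2).div_const (t - τ)).sub_const 1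
      simpa using this
    have e1 : 2 * (s - τ) / (t - τ) - 1 ≠ -1 := by
      have : 0 < 2 * (s - τ) / (t - τ) := by
        apply div_pos _ htt; linarith [hs.1]
      linarith
    have e2 : 2 * (s - τ) / (t - τ) - 1 ≠ 1 := by
      have : 2 * (s - τ) / (t - τ) < 2 := by
        rw [div_lt_iff₀ htt]; linarith [hs.2]
      linarith
    have h2 := (Real.hasDerivAt_arcsin e1 e2).comp s h1
    refine h2.congr_deriv ?_; symm
    have e3 : 1 - (2 * (s - τ) / (t - τ) - 1) ^ 2
        = ((2 / (t - τ)) ^ 2 * ((s - τ) * (t - s))) := by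
      field_simp; ring
    have hs1 : 0 < s - τ := by linarith [hs.1]
    have hs2 : 0 < t - s := by linarith [hs.2]
    rw [e3, Real.sqrt_mul (by positivity), Real.sqrt_sq (by positivity), Real.sqrt_mul hs1.le]
    have := Real.sqrt_pos.2 hs1
    have := Real.sqrt_pos.2 hs2
    field_simp
  have hc : ContinuousOn (fun s => Real.arcsin (2 * (s - τ) / (t - τ) - 1)) (Set.Icc τ t) := by
    apply Continuous.continuousOn
    apply Real.continuous_arcsin.comp
    fun_prop
  have hi : IntegrableOn (fun s => (Real.sqrt (s - τ))⁻¹ * (Real.sqrt (t - s))⁻¹)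
      (Set.Ioc τ t) :=
    intervalIntegral.integrableOn_deriv_of_nonneg hc hd (fun τ _ => by positivity)
  have hsub : Set.Ioo τ t ⊆ Set.Ioo 0 T := fun s hs => ⟨by linarith [hs.1], by linarith [hs.2]⟩
  constructor
  · exact (hi.mono_set Set.Ioo_subset_Ioc_self).of_forall_sdiff_eq_zero measurableSet_Ioo
      (fun s hs => hz s hs.2)
  · rw [setIntegral_eq_of_subset_of_forall_sdiff_eq_zero measurableSet_Ioo hsub
      (fun s hs => hz s hs.2), ← integral_Ioc_eq_integral_Ioo,
      ← intervalIntegral.integral_of_le hτt.le,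
      intervalIntegral.integral_eq_sub_of_hasDerivAt_of_le hτt.le hc hd
      ((intervalIntegrable_iff_integrableOn_Ioc_of_le hτt.le).2 hi)]
    have : t - τ ≠ 0 := by linarith
    have e : 2 * (t - τ) / (t - τ) - 1 = 1 := by field_simp; ring
    rw [e]
    simp

lemma Ih_semigroup (T : ℝ) (h : ℝ → ℝ) (C : ℝ)
    (hm : AEStronglyMeasurable h (volume.restrict (Set.Ioo 0 T)))
    (hb : ∀ t ∈ Set.Ioo 0 T, |h t| ≤ C) (t : ℝ) (ht : t ∈ Set.Ioo 0 T) :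
    Ih T (Ih T h) t = Real.pi * ∫ τ in Set.Ioo 0 t, h τ := by
  set μ := volume.restrict (Set.Ioo (0:ℝ) T) with hμ
  -- integrand on (s, τ)
  have kmeas : Measurable (fun q : ℝ × ℝ => (Real.sqrt (q.1 - q.2))⁻¹ * (Real.sqrt (t - q.1))⁻¹) := by
    fun_prop
  have hval : ∀ τ ∈ Set.Ioo 0 T,
      Integrable (fun s => (Real.sqrt (s - τ))⁻¹ * (Real.sqrt (t - s))⁻¹) μ ∧
      ∫ s, (Real.sqrt (s - τ))⁻¹ * (Real.sqrt (t - s))⁻¹ ∂μ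
        = (Set.Iio t).indicator (fun _ => Real.pi) τ := by
    intro τ hτ
    by_cases hτt : τ < t
    · have := ker_int T t τ hτ.1 hτt ht.2.le
      refine ⟨this.1, ?_⟩
      rw [Set.indicator_of_mem (by exact hτt)]
      exact this.2
    · have : (fun s => (Real.sqrt (s - τ))⁻¹ * (Real.sqrt (t - s))⁻¹) = fun _ => 0 := by
        funext s
        by_cases h : τ < s
        · rw [w_zero t s (by linarith), mul_zero]
        · rw [w_zero s τ (by linarith), zero_mul]
      rw [this, Set.indicator_of_notMem (by exact hτt)]
      simp
  have kint : Integrable (fun q : ℝ × ℝ => (Real.sqrt (q.1 - q.2))⁻¹ * (Real.sqrt (t - q.1))⁻¹)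
      (μ.prod μ) := by
    rw [integrable_prod_iff' kmeas.aestronglyMeasurable]
    constructor
    · filter_upwards [ae_restrict_mem measurableSet_Ioo] with τ hτ
      exact (hval τ hτ).1
    · have : Integrable ((Set.Iio t).indicator (fun _ => Real.pi)) μ :=
        (integrable_const _).indicator measurableSet_Iio
      apply this.congr
      filter_upwards [ae_restrict_mem measurableSet_Ioo] with τ hτ
      rw [← (hval τ hτ).2]
      congr 1
      funext s
      rw [Real.norm_of_nonneg (by positivity)]
  have hint : Integrable (fun q : ℝ × ℝ =>
      h q.2 * ((Real.sqrt (q.1 - q.2))⁻¹ * (Real.sqrt (t - q.1))⁻¹)) (μ.prod μ) := by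
    apply kint.bdd_mul (c := C)
    · exact hm.comp_snd
    · have : ∀ᵐ q ∂(μ.prod μ), q ∈ Set.Ioo 0 T ×ˢ Set.Ioo 0 T := by
        rw [hμ, Measure.prod_restrict]
        exact ae_restrict_mem (measurableSet_Ioo.prod measurableSet_Ioo)
      filter_upwards [this] with q hq
      exact hb _ hq.2
  have e1 : Ih T (Ih T h) t = ∫ s, ∫ τ, h τ * ((Real.sqrt (s - τ))⁻¹ * (Real.sqrt (t - s))⁻¹) ∂μ ∂μ := by
    unfold Ih
    congr 1
    funext s
    rw [← integral_mul_const]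
    congr 1
    funext τ
    ring
  rw [e1, integral_integral_swap (f := fun s τ => h τ * ((Real.sqrt (s - τ))⁻¹ * (Real.sqrt (t - s))⁻¹)) hint]
  have e2 : ∫ τ, ∫ s, h τ * ((Real.sqrt (s - τ))⁻¹ * (Real.sqrt (t - s))⁻¹) ∂μ ∂μ
      = ∫ τ, h τ * (Set.Iio t).indicator (fun _ => Real.pi) τ ∂μ := by
    apply integral_congr_ae
    filter_upwards [ae_restrict_mem measurableSet_Ioo] with τ hτ
    rw [integral_const_mul, (hval τ hτ).2]
  rw [e2, hμ, Ioo_restrict T t ht.2.le, ← integral_const_mul]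
  · apply setIntegral_congr_fun measurableSet_Ioo
    intro τ hτ
    simp only
    rw [Set.indicator_of_mem (by exact hτ.2), mul_comm]
  · intro τ hτ
    rw [Set.indicator_of_notMem (by simpa using hτ), mul_zero]

lemma Ih_bdd (T : ℝ) (h : ℝ → ℝ) (C : ℝ) (hb : ∀ t ∈ Set.Ioo 0 T, |h t| ≤ C)
    (t : ℝ) (ht : t ∈ Set.Ioo 0 T) : |Ih T h t| ≤ C * (2 * Real.sqrt T) := by
  have hC : 0 ≤ C := (abs_nonneg _).trans (hb t ht)
  calc |Ih T h t| ≤ ∫ τ in Set.Ioo 0 T, C * (Real.sqrt (t - τ))⁻¹ := by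
        rw [← Real.norm_eq_abs]
        unfold Ih
        apply norm_integral_le_of_norm_le ((w_int T t ht.1).const_mul C)
        filter_upwards [ae_restrict_mem measurableSet_Ioo] with τ hτ
        rw [norm_mul, Real.norm_of_nonneg (r := (Real.sqrt (t - τ))⁻¹) (by positivity)]
        exact mul_le_mul_of_nonneg_right (hb τ hτ) (by positivity)
    _ = C * (2 * Real.sqrt t) := by rw [integral_const_mul, w_val T t ht.1 ht.2.le]
    _ ≤ _ := by
        have := Real.sqrt_le_sqrt ht.2.le
        gcongr

lemma Ih_cont (T : ℝ) (h : ℝ → ℝ) (C : ℝ) (hc : ContinuousOn h (Set.Ioo 0 T))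
    (hb : ∀ t ∈ Set.Ioo 0 T, |h t| ≤ C) : ContinuousOn (Ih T h) (Set.Ioo 0 T) := by
  have e : ∀ t ∈ Set.Ioo 0 T, Ih T h t
      = ∫ s in Set.Ioo 0 1, h (t * s) * (Real.sqrt t * (Real.sqrt (1 - s))⁻¹) := by
    intro t ht
    have ht0 := ht.1
    unfold Ih
    rw [Ioo_restrict T t ht.2.le _ (fun τ h => by rw [w_zero t τ h, mul_zero]),
      ← integral_Ioc_eq_integral_Ioo, ← integral_Ioc_eq_integral_Ioo,
      ← intervalIntegral.integral_of_le ht0.le, ← intervalIntegral.integral_of_le zero_le_one]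
    have := intervalIntegral.integral_comp_mul_left (a := 0) (b := 1)
      (fun τ => h τ * (Real.sqrt (t - τ))⁻¹) ht0.ne'
    rw [mul_zero, mul_one, smul_eq_mul] at this
    have h2 : ∫ τ in (0:ℝ)..t, h τ * (Real.sqrt (t - τ))⁻¹
        = t * ∫ s in (0:ℝ)..1, h (t * s) * (Real.sqrt (t - t * s))⁻¹ := by
      rw [this]; field_simp
    rw [h2, ← intervalIntegral.integral_const_mul]
    congr 1
    funext s
    rw [show t - t * s = t * (1 - s) by ring, Real.sqrt_mul ht0.le]
    have h3 := Real.sqrt_pos.2 ht0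
    have h4 : t = Real.sqrt t * Real.sqrt t := (Real.mul_self_sqrt ht0.le).symm
    have h5 : t * (Real.sqrt t)⁻¹ = Real.sqrt t := by
      nth_rewrite 1 [h4]; field_simp
    calc _ = h (t * s) * ((t * (Real.sqrt t)⁻¹) * (Real.sqrt (1 - s))⁻¹) := by
          rw [mul_inv]; ring
      _ = _ := by rw [h5]
  refine ContinuousOn.congr ?_ e
  have hmap : ∀ t ∈ Set.Ioo 0 T, ∀ s ∈ Set.Ioo (0:ℝ) 1, t * s ∈ Set.Ioo 0 T := by
    intro t ht s hs
    refine ⟨mul_pos ht.1 hs.1, ?_⟩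
    nlinarith [ht.1, ht.2, hs.1, hs.2]
  apply continuousOn_of_dominated (bound := fun s => C * (Real.sqrt T * (Real.sqrt (1 - s))⁻¹))
  · intro t ht
    apply AEStronglyMeasurable.mul
    · apply ContinuousOn.aestronglyMeasurable _ measurableSet_Ioo
      exact hc.comp (by fun_prop) (fun s hs => hmap t ht s hs)
    · apply Measurable.aestronglyMeasurable; fun_prop
  · intro t ht
    filter_upwards [ae_restrict_mem measurableSet_Ioo] with s hs
    have h1 := hb _ (hmap t ht s hs)
    rw [norm_mul, Real.norm_of_nonneg (r := (Real.sqrt t * (Real.sqrt (1 - s))⁻¹)) (by positivity)]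
    have := Real.sqrt_le_sqrt ht.2.le
    have hC : 0 ≤ C := (abs_nonneg _).trans h1
    rw [Real.norm_eq_abs]
    gcongr
  · exact ((w_int 1 1 one_pos).const_mul _).const_mul _
  · filter_upwards [ae_restrict_mem measurableSet_Ioo] with s hs
    apply ContinuousOn.mul
    · exact hc.comp (by fun_prop) (fun t ht => hmap t ht s hs)
    · fun_prop

lemma eq_of_prim (T : ℝ) (h k : ℝ → ℝ) (C : ℝ)
    (hh : ContinuousOn h (Set.Ioo 0 T)) (hk : ContinuousOn k (Set.Ioo 0 T))
    (hhb : ∀ t ∈ Set.Ioo 0 T, |h t| ≤ C) (hkb : ∀ t ∈ Set.Ioo 0 T, |k t| ≤ C)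
    (e : ∀ t ∈ Set.Ioo 0 T, ∫ τ in Set.Ioo 0 t, h τ = ∫ τ in Set.Ioo 0 t, k τ) :
    ∀ t ∈ Set.Ioo 0 T, h t = k t := by
  have key : ∀ f : ℝ → ℝ, ContinuousOn f (Set.Ioo 0 T) → (∀ t ∈ Set.Ioo 0 T, |f t| ≤ C) →
      ∀ t ∈ Set.Ioo 0 T, HasDerivAt (fun r => ∫ τ in Set.Ioo 0 r, f τ) (f t) t := by
    intro f hf hfb t ht
    have hi : IntegrableOn f (Set.Ioo 0 T) := by
      apply Integrable.of_bound (hf.aestronglyMeasurable measurableSet_Ioo) C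
      filter_upwards [ae_restrict_mem measurableSet_Ioo] with s hs
      exact hfb s hs
    have h1 : HasDerivAt (fun r => ∫ τ in (0:ℝ)..r, f τ) (f t) t := by
      apply intervalIntegral.integral_hasDerivAt_right
      · rw [intervalIntegrable_iff_integrableOn_Ioc_of_le ht.1.le]
        exact hi.mono_set (fun s hs => ⟨hs.1, by linarith [hs.2, ht.2]⟩)
      · exact hf.stronglyMeasurableAtFilter isOpen_Ioo t ht
      · exact hf.continuousAt (isOpen_Ioo.mem_nhds ht)
    apply h1.congr_of_eventuallyEq
    filter_upwards [isOpen_Ioo.mem_nhds ht] with r hr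
    rw [intervalIntegral.integral_of_le hr.1.le, integral_Ioc_eq_integral_Ioo]
  intro t ht
  have h1 := key h hh hhb t ht
  have h2 := key k hk hkb t ht
  apply h1.unique
  apply h2.congr_of_eventuallyEq
  filter_upwards [isOpen_Ioo.mem_nhds ht] with r hr
  exact e r hr

lemma abel (T : ℝ) (h k : ℝ → ℝ) (C : ℝ)
    (hh : ContinuousOn h (Set.Ioo 0 T)) (hk : ContinuousOn k (Set.Ioo 0 T))
    (hhb : ∀ t ∈ Set.Ioo 0 T, |h t| ≤ C) (hkb : ∀ t ∈ Set.Ioo 0 T, |k t| ≤ C)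
    (e : ∀ t ∈ Set.Ioo 0 T, (Real.Gamma (1 / 2))⁻¹ * Ih T h t = ∫ τ in Set.Ioo 0 t, k τ) :
    ∀ t ∈ Set.Ioo 0 T, h t = (Real.Gamma (1 / 2))⁻¹ * Ih T k t := by
  set c := (Real.Gamma (1 / 2))⁻¹ with hc
  have hpi := Real.pi_pos
  have hcc : c * c * Real.pi = 1 := by
    rw [hc, Real.Gamma_one_half_eq, ← mul_inv, Real.mul_self_sqrt hpi.le]
    field_simp
  have congrI : ∀ f g : ℝ → ℝ, (∀ t ∈ Set.Ioo 0 T, f t = g t) → Ih T f = Ih T g := by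
    intro f g hfg
    funext t
    apply setIntegral_congr_fun measurableSet_Ioo
    intro τ hτ
    simp only [hfg τ hτ]
  have cI : ∀ (a : ℝ) (f : ℝ → ℝ), Ih T (fun s => a * f s) = fun t => a * Ih T f t := by
    intro a f
    funext t
    unfold Ih
    rw [← integral_const_mul]
    congr 1
    funext τ
    ring
  have hIkc := Ih_cont T k C hk hkb
  have hIkb := Ih_bdd T k C hkb
  apply eq_of_prim T h (fun t => c * Ih T k t) (max C (|c| * (C * (2 * Real.sqrt T)))) hh (continuousOn_const.mul hIkc)
    (fun t ht => (hhb t ht).trans (le_max_left _ _))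
  · intro t ht
    rw [abs_mul]
    exact (mul_le_mul_of_nonneg_left (hIkb t ht) (abs_nonneg _)).trans (le_max_right _ _)
  · intro t ht
    have s1 := Ih_semigroup T h C (hh.aestronglyMeasurable measurableSet_Ioo) hhb t ht
    have s2 := Ih_semigroup T (Ih T k) _ (hIkc.aestronglyMeasurable measurableSet_Ioo) hIkb t ht
    have s3 : Ih T (Ih T (Ih T k)) t = Ih T (fun s => Real.pi * c * Ih T h s) t := by
      rw [congrI (Ih T (Ih T k)) (fun s => Real.pi * c * Ih T h s)]
      intro s hs
      have s4 := Ih_semigroup T k C (hk.aestronglyMeasurable measurableSet_Ioo) hkb s hs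
      rw [s4, ← e s hs]; ring
    rw [s2, cI] at s3
    simp only at s3
    rw [s1] at s3
    rw [integral_const_mul]
    have s5 : ∫ τ in Set.Ioo 0 t, Ih T k τ = Real.pi * c * ∫ τ in Set.Ioo 0 t, h τ := by
      have : Real.pi * (∫ τ in Set.Ioo 0 t, Ih T k τ)
          = Real.pi * (Real.pi * c * ∫ τ in Set.Ioo 0 t, h τ) := by rw [s3]; ring
      exact mul_left_cancel₀ hpi.ne' this
    rw [s5]
    linear_combination (-∫ τ in Set.Ioo 0 t, h τ) * hcc

lemma C2facts (U : ℝ × ℝ → ℝ) (S : Set (ℝ × ℝ)) (hS : IsOpen S) (hU : ContDiffOn ℝ 2 U S)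
    (x t : ℝ) (hxt : (x, t) ∈ S) :
    HasDerivAt (fun τ => U (x, τ)) (deriv (fun τ => U (x, τ)) t) t ∧
    HasDerivAt (fun y => U (y, t)) (deriv (fun y => U (y, t)) x) x ∧
    HasDerivAt (deriv (fun y => U (y, t))) (deriv (deriv (fun y => U (y, t))) x) x ∧
    HasDerivAt (fun y => deriv (fun τ => U (y, τ)) t)
      (deriv (fun y => deriv (fun τ => U (y, τ)) t) x) x ∧
    HasDerivAt (fun τ => deriv (fun y => U (y, τ)) x)
      (deriv (fun y => deriv (fun τ => U (y, τ)) t) x) t ∧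
    ContinuousAt (deriv (fun τ => U (x, τ))) t := by
  have cx : ∀ x t : ℝ, HasDerivAt (fun y : ℝ => (y, t)) ((1 : ℝ), (0 : ℝ)) x := fun x t =>
    (hasDerivAt_id x).prodMk (hasDerivAt_const x t)
  have ct : ∀ x t : ℝ, HasDerivAt (fun τ : ℝ => (x, τ)) ((0 : ℝ), (1 : ℝ)) t := fun x t =>
    (hasDerivAt_const t x).prodMk (hasDerivAt_id t)
  have hfd : ∀ q ∈ S, HasFDerivAt U (fderiv ℝ U q) q := fun q hq =>
    ((hU.contDiffAt (hS.mem_nhds hq)).differentiableAt (by norm_num)).hasFDerivAt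
  have dx : ∀ x t : ℝ, (x, t) ∈ S → HasDerivAt (fun y => U (y, t)) (fderiv ℝ U (x, t) (1, 0)) x :=
    fun x t h => (hfd _ h).comp_hasDerivAt x (cx x t)
  have dt : ∀ x t : ℝ, (x, t) ∈ S → HasDerivAt (fun τ => U (x, τ)) (fderiv ℝ U (x, t) (0, 1)) t :=
    fun x t h => (hfd _ h).comp_hasDerivAt t (ct x t)
  have hC : ContDiffAt ℝ 2 U (x, t) := hU.contDiffAt (hS.mem_nhds hxt)
  have h2 : HasFDerivAt (fderiv ℝ U) (fderiv ℝ (fderiv ℝ U) (x, t)) (x, t) :=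
    ((hC.fderiv_right (m := 1) (by norm_num)).differentiableAt (by norm_num)).hasFDerivAt
  have hsymm := hC.isSymmSndFDerivAt (by simp)
  have ex : ∀ᶠ y in nhds x, (y, t) ∈ S := (cx x t).continuousAt.eventually (hS.mem_nhds hxt)
  have et : ∀ᶠ τ in nhds t, (x, τ) ∈ S := (ct x t).continuousAt.eventually (hS.mem_nhds hxt)
  have h2x : ∀ w : ℝ × ℝ, HasDerivAt (fun y => fderiv ℝ U (y, t) w)
      (fderiv ℝ (fderiv ℝ U) (x, t) (1, 0) w) x := by
    intro w
    have := h2.comp_hasDerivAt x (cx x t)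
    have := this.clm_apply (hasDerivAt_const x w)
    simpa using this
  have h2t : ∀ w : ℝ × ℝ, HasDerivAt (fun τ => fderiv ℝ U (x, τ) w)
      (fderiv ℝ (fderiv ℝ U) (x, t) (0, 1) w) t := by
    intro w
    have := h2.comp_hasDerivAt t (ct x t)
    have := this.clm_apply (hasDerivAt_const t w)
    simpa using this
  have a3 : HasDerivAt (deriv (fun y => U (y, t))) (fderiv ℝ (fderiv ℝ U) (x, t) (1, 0) (1, 0)) x := by
    apply (h2x (1, 0)).congr_of_eventuallyEq
    filter_upwards [ex] with y hy
    exact (dx y t hy).deriv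
  have a4 : HasDerivAt (fun y => deriv (fun τ => U (y, τ)) t)
      (fderiv ℝ (fderiv ℝ U) (x, t) (1, 0) (0, 1)) x := by
    apply (h2x (0, 1)).congr_of_eventuallyEq
    filter_upwards [ex] with y hy
    exact (dt y t hy).deriv
  have a5 : HasDerivAt (fun τ => deriv (fun y => U (y, τ)) x)
      (fderiv ℝ (fderiv ℝ U) (x, t) (1, 0) (0, 1)) t := by
    rw [hsymm]
    apply (h2t (1, 0)).congr_of_eventuallyEq
    filter_upwards [et] with y hy
    exact (dx x y hy).deriv
  have a6 : HasDerivAt (deriv (fun τ => U (x, τ))) (fderiv ℝ (fderiv ℝ U) (x, t) (0, 1) (0, 1)) t := by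
    apply (h2t (0, 1)).congr_of_eventuallyEq
    filter_upwards [et] with y hy
    exact (dt x y hy).deriv
  refine ⟨(dt x t hxt).differentiableAt.hasDerivAt, (dx x t hxt).differentiableAt.hasDerivAt,
    a3.differentiableAt.hasDerivAt, a4.differentiableAt.hasDerivAt, ?_, a6.continuousAt⟩
  rw [a4.deriv]
  exact a5

lemma aesm_deriv {α : Type*} [MeasurableSpace α] (m : Measure α) (f : α → ℝ → ℝ) (a : α → ℝ)
    (ha : Measurable a) (hf : Measurable (fun q : α × ℝ => f q.1 q.2)) (d : α → ℝ)
    (hd : ∀ᵐ q ∂m, HasDerivAt (f q) (d q) (a q)) : AEStronglyMeasurable d m := by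
  apply AEMeasurable.aestronglyMeasurable
  apply aemeasurable_of_tendsto_metrizable_ae (nhdsWithin (0:ℝ) {0}ᶜ)
    (f := fun t q => t⁻¹ * (f q (a q + t) - f q (a q)))
  · intro t
    apply Measurable.aemeasurable
    apply Measurable.const_mul
    apply Measurable.sub
    · exact hf.comp (measurable_id.prodMk (ha.add_const t))
    · exact hf.comp (measurable_id.prodMk ha)
  · filter_upwards [hd] with q hq
    exact hq.tendsto_slope_zero

lemma Vset_meas (v₀ v₁ : ℝ) : MeasurableSet (Vset v₀ v₁) :=
  measurableSet_Icc.union measurableSet_Icc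

lemma Vset_abs (v₀ v₁ v : ℝ) (h0 : 0 < v₀) (h : v ∈ Vset v₀ v₁) : |v| ≤ v₁ := by
  rcases h with h | h <;> rw [abs_le] <;> constructor <;> linarith [h.1, h.2]

instance Vset_fin (v₀ v₁ : ℝ) : IsFiniteMeasure (volume.restrict (Vset v₀ v₁)) := by
  unfold Vset
  refine ⟨?_⟩
  rw [Measure.restrict_apply_univ]
  exact measure_union_lt_top (by simp) (by simp)

lemma lin4 {α : Type*} [MeasurableSpace α] {m : Measure α} {f₁ f₂ f₃ f₄ : α → ℝ}
    (h₁ : Integrable f₁ m) (h₂ : Integrable f₂ m) (h₃ : Integrable f₃ m) (h₄ : Integrable f₄ m)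
    (a₁ a₂ a₃ a₄ : ℝ) :
    Integrable (fun x => a₁ * f₁ x + a₂ * f₂ x + a₃ * f₃ x + a₄ * f₄ x) m ∧
    ∫ x, (a₁ * f₁ x + a₂ * f₂ x + a₃ * f₃ x + a₄ * f₄ x) ∂m
      = a₁ * (∫ x, f₁ x ∂m) + a₂ * (∫ x, f₂ x ∂m) + a₃ * (∫ x, f₃ x ∂m) + a₄ * (∫ x, f₄ x ∂m) := by
  have k₁ := h₁.const_mul a₁
  have k₂ := h₂.const_mul a₂
  have k₃ := h₃.const_mul a₃
  have k₄ := h₄.const_mul a₄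
  have k12 : Integrable (fun x => a₁ * f₁ x + a₂ * f₂ x) m := k₁.add k₂
  have k123 : Integrable (fun x => a₁ * f₁ x + a₂ * f₂ x + a₃ * f₃ x) m := k12.add k₃
  refine ⟨k123.add k₄, ?_⟩
  rw [integral_add k123 k₄, integral_add k12 k₃, integral_add k₁ k₂]
  simp only [integral_const_mul]

lemma lin6 {α : Type*} [MeasurableSpace α] {m : Measure α} {f₁ f₂ f₃ f₄ f₅ f₆ : α → ℝ}
    (h₁ : Integrable f₁ m) (h₂ : Integrable f₂ m) (h₃ : Integrable f₃ m) (h₄ : Integrable f₄ m)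
    (h₅ : Integrable f₅ m) (h₆ : Integrable f₆ m) (a₁ a₂ a₃ a₄ a₅ a₆ : ℝ) :
    ∫ x, (a₁ * f₁ x + a₂ * f₂ x + a₃ * f₃ x + a₄ * f₄ x + a₅ * f₅ x + a₆ * f₆ x) ∂m
      = a₁ * (∫ x, f₁ x ∂m) + a₂ * (∫ x, f₂ x ∂m) + a₃ * (∫ x, f₃ x ∂m) + a₄ * (∫ x, f₄ x ∂m)
        + a₅ * (∫ x, f₅ x ∂m) + a₆ * (∫ x, f₆ x ∂m) := by
  obtain ⟨k, e⟩ := lin4 h₁ h₂ h₃ h₄ a₁ a₂ a₃ a₄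
  have k₅ := h₅.const_mul a₅
  have k₆ := h₆.const_mul a₆
  have k5 : Integrable (fun x => a₁ * f₁ x + a₂ * f₂ x + a₃ * f₃ x + a₄ * f₄ x + a₅ * f₅ x) m :=
    k.add k₅
  rw [integral_add k5 k₆, integral_add k k₅, e]
  simp only [integral_const_mul]

/-- Section 3: reduction of the half-order fractional radiative transport
equation `∂ₜ^{1/2}u + v∂ₓu + σₜu = σₛ∫pu dv' + F` to the first-order-in-time
equation `∂ₜu = v²∂ₓ²u + L₁u + ∫K u dv' + f`. -/
theorem reduction_half_to_one
    (ℓ v₀ v₁ T M : ℝ) (hℓ : 0 < ℓ) (hv₀ : 0 < v₀) (hv₀₁ : v₀ < v₁)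
    (hT : 0 < T) (hM : 0 < M)
    (σt σs : ℝ → ℝ → ℝ) (p : ℝ → ℝ → ℝ → ℝ)
    (F : ℝ → ℝ → ℝ → ℝ) (u : ℝ → ℝ → ℝ → ℝ)
    -- coefficients: C¹ in x, bounded measurable in v
    (hσt_reg : ∀ v ∈ Vset v₀ v₁, ContDiffOn ℝ 1 (fun x => σt x v) (Set.Icc 0 ℓ))
    (hσs_reg : ∀ v ∈ Vset v₀ v₁, ContDiffOn ℝ 1 (fun x => σs x v) (Set.Icc 0 ℓ))
    (hσ_meas : Measurable (fun q : ℝ × ℝ => σt q.1 q.2) ∧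
      Measurable (fun q : ℝ × ℝ => σs q.1 q.2))
    (hσ_bdd : ∀ x ∈ Set.Icc 0 ℓ, ∀ v ∈ Vset v₀ v₁,
      |σt x v| ≤ M ∧ |σs x v| ≤ M ∧
      |deriv (fun y => σt y v) x| ≤ M ∧ |deriv (fun y => σs y v) x| ≤ M)
    (hp_reg : ∀ v ∈ Vset v₀ v₁, ∀ v' ∈ Vset v₀ v₁,
      ContDiffOn ℝ 1 (fun x => p x v v') (Set.Icc 0 ℓ))
    (hp_meas : Measurable fun q : ℝ × ℝ × ℝ => p q.1 q.2.1 q.2.2)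
    (hp_bdd : ∀ x ∈ Set.Icc 0 ℓ, ∀ v ∈ Vset v₀ v₁, ∀ v' ∈ Vset v₀ v₁,
      |p x v v'| ≤ M ∧ |deriv (fun y => p y v v') x| ≤ M)
    (hp_pos : ∀ x ∈ Set.Icc 0 ℓ, ∀ v ∈ Vset v₀ v₁, ∀ v' ∈ Vset v₀ v₁, 0 < p x v v')
    -- source: C¹ in (x,t), measurable in v, with ∂ₜ^{1/2}F well defined
    (hF_reg : ∀ v ∈ Vset v₀ v₁,
      ContDiffOn ℝ 1 (fun q : ℝ × ℝ => F q.1 v q.2) (Set.Icc 0 ℓ ×ˢ Set.Icc 0 T))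
    (hF_meas : Measurable fun q : ℝ × ℝ × ℝ => F q.1 q.2.1 q.2.2)
    (hF_caputo : ∀ x ∈ Set.Icc 0 ℓ, ∀ v ∈ Vset v₀ v₁, ∀ t ∈ Set.Ioo 0 T,
      IntegrableOn (fun τ => deriv (fun σ => F x v σ) τ / Real.sqrt (t - τ))
        (Set.Ioo 0 t))
    -- solution: C² in (x,t) with bounded derivatives, measurable in v
    (hu_reg : ∀ v ∈ Vset v₀ v₁,
      ContDiffOn ℝ 2 (fun q : ℝ × ℝ => u q.1 v q.2) (Set.Icc 0 ℓ ×ˢ Set.Icc 0 T))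
    (hu_meas : Measurable fun q : ℝ × ℝ × ℝ => u q.1 q.2.1 q.2.2)
    (hu_bdd : ∀ x ∈ Set.Icc 0 ℓ, ∀ v ∈ Vset v₀ v₁, ∀ t ∈ Set.Icc 0 T,
      |u x v t| ≤ M ∧
      |deriv (fun τ => u x v τ) t| ≤ M ∧
      |deriv (fun y => u y v t) x| ≤ M ∧
      |deriv (deriv (fun τ => u x v τ)) t| ≤ M ∧
      |deriv (deriv (fun y => u y v t)) x| ≤ M)
    -- vanishing data at t = 0
    (hu_init : ∀ x ∈ Set.Icc 0 ℓ, ∀ v ∈ Vset v₀ v₁, u x v 0 = 0)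
    (hu_caputo0 : ∀ x ∈ Set.Icc 0 ℓ, ∀ v ∈ Vset v₀ v₁,
      Filter.Tendsto (fun t => caputoHalf (fun τ => u x v τ) t)
        (nhdsWithin 0 (Set.Ioi 0)) (nhds 0))
    -- the mixed derivative ∂ₓ∂ₜu is continuous and bounded
    (hu_mixed : ∀ v ∈ Vset v₀ v₁,
      ContinuousOn
        (fun q : ℝ × ℝ => deriv (fun y => deriv (fun τ => u y v τ) q.2) q.1)
        (Set.Icc 0 ℓ ×ˢ Set.Icc 0 T) ∧
      ∀ x ∈ Set.Icc 0 ℓ, ∀ t ∈ Set.Icc 0 T,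
        |deriv (fun y => deriv (fun τ => u y v τ) t) x| ≤ M)
    -- t ↦ ∂ₜ^{1/2}u(x,v,t) is absolutely continuous (FTC form, with value 0 at 0)
    (hu_caputoAC : ∀ x ∈ Set.Icc 0 ℓ, ∀ v ∈ Vset v₀ v₁,
      IntegrableOn (deriv (fun r => caputoHalf (fun τ => u x v τ) r)) (Set.Ioo 0 T) ∧
      ∀ t ∈ Set.Icc 0 T,
        caputoHalf (fun τ => u x v τ) t
          = ∫ r in Set.Ioo 0 t, deriv (fun r' => caputoHalf (fun τ => u x v τ) r') r)
    -- the fractional radiative transport equation with source F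
    (hPDE : ∀ x ∈ Set.Ioo 0 ℓ, ∀ v ∈ Vset v₀ v₁, ∀ t ∈ Set.Ioo 0 T,
      caputoHalf (fun τ => u x v τ) t + v * deriv (fun y => u y v t) x
        + σt x v * u x v t
        = σs x v * (∫ v' in Vset v₀ v₁, p x v v' * u x v' t) + F x v t) :
    ∀ x ∈ Set.Ioo 0 ℓ, ∀ v ∈ Vset v₀ v₁, ∀ t ∈ Set.Ioo 0 T,
      deriv (fun τ => u x v τ) t
        = v ^ 2 * deriv (deriv (fun y => u y v t)) x
          + (2 * v * σt x v * deriv (fun y => u y v t) x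
              + (v * deriv (fun y => σt y v) x + (σt x v) ^ 2) * u x v t)
          + (∫ v' in Vset v₀ v₁,
              (-(v * deriv (fun y => σs y v * p y v v') x) * u x v' t
                - σs x v * p x v v' *
                    ((v + v') * deriv (fun y => u y v' t) x
                      + (σt x v + σt x v') * u x v' t)
                + σs x v * u x v' t *
                    ∫ v'' in Vset v₀ v₁, σs x v'' * p x v v'' * p x v'' v'))
          + (-(v * deriv (fun y => F y v t) x) - σt x v * F x v t
              + σs x v * (∫ v' in Vset v₀ v₁, p x v v' * F x v' t)
              + caputoHalf (fun τ => F x v τ) t) := by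
  set c := (Real.Gamma (1 / 2))⁻¹ with hc
  set V := Vset v₀ v₁ with hV
  set μ := volume.restrict (Set.Ioo (0:ℝ) T) with hμ
  set ν := volume.restrict V with hν
  have hVm : MeasurableSet V := Vset_meas v₀ v₁
  have : IsFiniteMeasure ν := Vset_fin v₀ v₁
  have hν_mem : ∀ᵐ v ∂ν, v ∈ V := ae_restrict_mem hVm
  have hμ_mem : ∀ᵐ t ∂μ, t ∈ Set.Ioo 0 T := ae_restrict_mem measurableSet_Ioo
  have hμν_mem : ∀ᵐ q ∂(μ.prod ν), q ∈ Set.Ioo 0 T ×ˢ V := by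
    rw [hμ, hν, Measure.prod_restrict]
    exact ae_restrict_mem (measurableSet_Ioo.prod hVm)
  have hνν_mem : ∀ᵐ q ∂(ν.prod ν), q ∈ V ×ˢ V := by
    rw [hν, Measure.prod_restrict]
    exact ae_restrict_mem (hVm.prod hVm)
  have io : ∀ x ∈ Set.Ioo 0 ℓ, x ∈ Set.Icc 0 ℓ := fun x hx => ⟨hx.1.le, hx.2.le⟩
  have ioT : ∀ t ∈ Set.Ioo 0 T, t ∈ Set.Icc 0 T := fun x hx => ⟨hx.1.le, hx.2.le⟩
  have hfacts : ∀ v ∈ V, ∀ x ∈ Set.Ioo 0 ℓ, ∀ t ∈ Set.Ioo 0 T, _ := fun v hv x hx t ht =>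
    C2facts (fun q : ℝ × ℝ => u q.1 v q.2) (Set.Ioo 0 ℓ ×ˢ Set.Ioo 0 T)
      (isOpen_Ioo.prod isOpen_Ioo)
      ((hu_reg v hv).mono (Set.prod_mono Set.Ioo_subset_Icc_self Set.Ioo_subset_Icc_self))
      x t ⟨hx, ht⟩
  simp only at hfacts
  have hFfacts : ∀ v ∈ V, ∀ x ∈ Set.Ioo 0 ℓ, ∀ t ∈ Set.Ioo 0 T,
      HasDerivAt (fun τ => F x v τ) (deriv (fun τ => F x v τ) t) t ∧
      HasDerivAt (fun y => F y v t) (deriv (fun y => F y v t) x) x := by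
    intro v hv x hx t ht
    have h0 : DifferentiableAt ℝ (fun q : ℝ × ℝ => F q.1 v q.2) (x, t) :=
      ((hF_reg v hv).contDiffAt (prod_mem_nhds (Icc_mem_nhds hx.1 hx.2)
        (Icc_mem_nhds ht.1 ht.2))).differentiableAt (by norm_num)
    constructor
    · apply DifferentiableAt.hasDerivAt
      exact h0.comp t (f := fun τ : ℝ => (x, τ)) (by fun_prop)
    · apply DifferentiableAt.hasDerivAt
      exact h0.comp x (f := fun y : ℝ => (y, t)) (by fun_prop)
  -- time derivative of F : continuous and bounded
  have hFt : ∀ v ∈ V, ∀ x ∈ Set.Ioo 0 ℓ,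
      ContinuousOn (deriv (fun τ => F x v τ)) (Set.Ioo 0 T) ∧
      ∃ C, ∀ t ∈ Set.Ioo 0 T, |deriv (fun τ => F x v τ) t| ≤ C := by
    intro v hv x hx
    have h1 : ContDiffOn ℝ 1 (fun τ => F x v τ) (Set.Icc 0 T) :=
      (hF_reg v hv).comp (f := fun τ : ℝ => (x, τ)) (by fun_prop) (fun τ hτ => ⟨io x hx, hτ⟩)
    have h2 := h1.continuousOn_derivWithin (uniqueDiffOn_Icc hT) (by norm_num)
    have h3 : ∀ t ∈ Set.Ioo 0 T, derivWithin (fun τ => F x v τ) (Set.Icc 0 T) t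
        = deriv (fun τ => F x v τ) t := fun t ht =>
      derivWithin_of_mem_nhds (Icc_mem_nhds ht.1 ht.2)
    constructor
    · exact (h2.mono Set.Ioo_subset_Icc_self).congr (fun t ht => (h3 t ht).symm)
    · obtain ⟨C, hC⟩ := isCompact_Icc.exists_bound_of_continuousOn h2
      refine ⟨C, fun t ht => ?_⟩
      rw [← h3 t ht]
      exact hC t (ioT t ht)
  -- measurability
  have mu : ∀ x t, Measurable (fun v' => u x v' t) := fun x t =>
    hu_meas.comp (g := fun q : ℝ × ℝ × ℝ => u q.1 q.2.1 q.2.2) (f := fun v' : ℝ => (x, v', t)) (by fun_prop)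
  have mp : ∀ x v, Measurable (fun v' => p x v v') := fun x v =>
    hp_meas.comp (f := fun v' : ℝ => (x, v, v')) (by fun_prop)
  have mp' : ∀ x, Measurable (fun q : ℝ × ℝ => p x q.1 q.2) := fun x =>
    hp_meas.comp (f := fun q : ℝ × ℝ => (x, q.1, q.2)) (by fun_prop)
  have mF : ∀ x t, Measurable (fun v' => F x v' t) := fun x t =>
    hF_meas.comp (f := fun v' : ℝ => (x, v', t)) (by fun_prop)
  have mσt : ∀ x, Measurable (fun v' => σt x v') := fun x =>
    hσ_meas.1.comp (f := fun v' : ℝ => (x, v')) (by fun_prop)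
  have mσs : ∀ x, Measurable (fun v' => σs x v') := fun x =>
    hσ_meas.2.comp (f := fun v' : ℝ => (x, v')) (by fun_prop)
  have mutt : ∀ x ∈ Set.Ioo 0 ℓ, AEStronglyMeasurable
      (fun q : ℝ × ℝ => deriv (fun τ => u x q.2 τ) q.1) (μ.prod ν) := by
    intro x hx
    apply aesm_deriv _ (fun q τ => u x q.2 τ) (fun q => q.1) measurable_fst
    · exact hu_meas.comp (f := fun r : (ℝ × ℝ) × ℝ => (x, r.1.2, r.2)) (by fun_prop)
    · filter_upwards [hμν_mem] with q hq
      exact (hfacts q.2 hq.2 x hx q.1 hq.1).1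
  have mut1 : ∀ x ∈ Set.Ioo 0 ℓ, ∀ t ∈ Set.Ioo 0 T, AEStronglyMeasurable
      (fun v' => deriv (fun τ => u x v' τ) t) ν := by
    intro x hx t ht
    apply aesm_deriv _ (fun v' τ => u x v' τ) (fun q => t) measurable_const
    · exact hu_meas.comp (f := fun r : ℝ × ℝ => (x, r.1, r.2)) (by fun_prop)
    · filter_upwards [hν_mem] with v' hv'
      exact (hfacts v' hv' x hx t ht).1
  have mux : ∀ x ∈ Set.Ioo 0 ℓ, ∀ t ∈ Set.Ioo 0 T, AEStronglyMeasurable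
      (fun v' => deriv (fun y => u y v' t) x) ν := by
    intro x hx t ht
    apply aesm_deriv _ (fun v' y => u y v' t) (fun q => x) measurable_const
    · exact hu_meas.comp (f := fun r : ℝ × ℝ => (r.2, r.1, t)) (by fun_prop)
    · filter_upwards [hν_mem] with v' hv'
      exact (hfacts v' hv' x hx t ht).2.1
  have hpd : ∀ x ∈ Set.Ioo 0 ℓ, ∀ v ∈ V, ∀ v' ∈ V,
      HasDerivAt (fun y => p y v v') (deriv (fun y => p y v v') x) x := fun x hx v hv v' hv' =>
    (((hp_reg v hv v' hv').contDiffAt (Icc_mem_nhds hx.1 hx.2)).differentiableAt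
      (by norm_num)).hasDerivAt
  have hσtd : ∀ x ∈ Set.Ioo 0 ℓ, ∀ v ∈ V,
      HasDerivAt (fun y => σt y v) (deriv (fun y => σt y v) x) x := fun x hx v hv =>
    (((hσt_reg v hv).contDiffAt (Icc_mem_nhds hx.1 hx.2)).differentiableAt
      (by norm_num)).hasDerivAt
  have hσsd : ∀ x ∈ Set.Ioo 0 ℓ, ∀ v ∈ V,
      HasDerivAt (fun y => σs y v) (deriv (fun y => σs y v) x) x := fun x hx v hv =>
    (((hσs_reg v hv).contDiffAt (Icc_mem_nhds hx.1 hx.2)).differentiableAt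
      (by norm_num)).hasDerivAt
  have mpx : ∀ x ∈ Set.Ioo 0 ℓ, ∀ v ∈ V, AEStronglyMeasurable
      (fun v' => deriv (fun y => p y v v') x) ν := by
    intro x hx v hv
    apply aesm_deriv _ (fun v' y => p y v v') (fun q => x) measurable_const
    · exact hp_meas.comp (f := fun r : ℝ × ℝ => (r.2, v, r.1)) (by fun_prop)
    · filter_upwards [hν_mem] with v' hv'
      exact hpd x hx v hv v' hv'
  have bu : ∀ x ∈ Set.Ioo 0 ℓ, ∀ v ∈ V, ∀ t ∈ Set.Ioo 0 T, |u x v t| ≤ M :=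
    fun x hx v hv t ht => (hu_bdd x (io x hx) v hv t (ioT t ht)).1
  have but : ∀ x ∈ Set.Ioo 0 ℓ, ∀ v ∈ V, ∀ t ∈ Set.Ioo 0 T, |deriv (fun τ => u x v τ) t| ≤ M :=
    fun x hx v hv t ht => (hu_bdd x (io x hx) v hv t (ioT t ht)).2.1
  have bux : ∀ x ∈ Set.Ioo 0 ℓ, ∀ v ∈ V, ∀ t ∈ Set.Ioo 0 T, |deriv (fun y => u y v t) x| ≤ M :=
    fun x hx v hv t ht => (hu_bdd x (io x hx) v hv t (ioT t ht)).2.2.1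
  have bp : ∀ x ∈ Set.Ioo 0 ℓ, ∀ v ∈ V, ∀ v' ∈ V, |p x v v'| ≤ M :=
    fun x hx v hv v' hv' => (hp_bdd x (io x hx) v hv v' hv').1
  have bpx : ∀ x ∈ Set.Ioo 0 ℓ, ∀ v ∈ V, ∀ v' ∈ V, |deriv (fun y => p y v v') x| ≤ M :=
    fun x hx v hv v' hv' => (hp_bdd x (io x hx) v hv v' hv').2
  have bσt : ∀ x ∈ Set.Ioo 0 ℓ, ∀ v ∈ V, |σt x v| ≤ M :=
    fun x hx v hv => (hσ_bdd x (io x hx) v hv).1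
  have bσs : ∀ x ∈ Set.Ioo 0 ℓ, ∀ v ∈ V, |σs x v| ≤ M :=
    fun x hx v hv => (hσ_bdd x (io x hx) v hv).2.1
  have bmul : ∀ {a b A B : ℝ}, |a| ≤ A → |b| ≤ B → |a * b| ≤ A * B := by
    intro a b A B ha hb
    rw [abs_mul]
    exact mul_le_mul ha hb (abs_nonneg _) ((abs_nonneg _).trans ha)
  have i1 : ∀ x ∈ Set.Ioo 0 ℓ, ∀ v ∈ V, ∀ t ∈ Set.Ioo 0 T,
      Integrable (fun v' => p x v v' * u x v' t) ν := by
    intro x hx v hv t ht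
    apply Integrable.of_bound ((mp x v).mul (mu x t)).aestronglyMeasurable (M * M)
    filter_upwards [hν_mem] with v' hv'
    exact bmul (bp x hx v hv v' hv') (bu x hx v' hv' t ht)
  -- Step B: time derivative of the integral
  have hB : ∀ x ∈ Set.Ioo 0 ℓ, ∀ v ∈ V, ∀ t ∈ Set.Ioo 0 T,
      HasDerivAt (fun r => ∫ v', p x v v' * u x v' r ∂ν)
        (∫ v', p x v v' * deriv (fun τ => u x v' τ) t ∂ν) t := by
    intro x hx v hv t ht
    refine (hasDerivAt_integral_of_dominated_loc_of_deriv_le (bound := fun _ => M * M)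
      (F := fun r v' => p x v v' * u x v' r)
      (F' := fun r v' => p x v v' * deriv (fun τ => u x v' τ) r)
      (isOpen_Ioo.mem_nhds ht) ?_ (i1 x hx v hv t ht) ?_ ?_ (integrable_const _) ?_).2
    · exact Filter.Eventually.of_forall
        (fun r => ((mp x v).mul (mu x r)).aestronglyMeasurable)
    · exact (mp x v).aestronglyMeasurable.mul (mut1 x hx t ht)
    · filter_upwards [hν_mem] with v' hv' r hr
      exact bmul (bp x hx v hv v' hv') (but x hx v' hv' r hr)
    · filter_upwards [hν_mem] with v' hv' r hr
      exact (hfacts v' hv' x hx r hr).1.const_mul _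
  -- Step G: space derivative of the integral
  have i2 : ∀ x ∈ Set.Ioo 0 ℓ, ∀ v ∈ V, ∀ t ∈ Set.Ioo 0 T,
      Integrable (fun v' => deriv (fun y => p y v v') x * u x v' t) ν := by
    intro x hx v hv t ht
    apply Integrable.of_bound ((mpx x hx v hv).mul (mu x t).aestronglyMeasurable) (M * M)
    filter_upwards [hν_mem] with v' hv'
    exact bmul (bpx x hx v hv v' hv') (bu x hx v' hv' t ht)
  have i3 : ∀ x ∈ Set.Ioo 0 ℓ, ∀ v ∈ V, ∀ t ∈ Set.Ioo 0 T,
      Integrable (fun v' => p x v v' * deriv (fun y => u y v' t) x) ν := by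
    intro x hx v hv t ht
    apply Integrable.of_bound ((mp x v).aestronglyMeasurable.mul (mux x hx t ht)) (M * M)
    filter_upwards [hν_mem] with v' hv'
    exact bmul (bp x hx v hv v' hv') (bux x hx v' hv' t ht)
  have hG : ∀ x ∈ Set.Ioo 0 ℓ, ∀ v ∈ V, ∀ t ∈ Set.Ioo 0 T,
      HasDerivAt (fun y => ∫ v', p y v v' * u y v' t ∂ν)
        ((∫ v', deriv (fun y => p y v v') x * u x v' t ∂ν)
          + ∫ v', p x v v' * deriv (fun y => u y v' t) x ∂ν) x := by
    intro x hx v hv t ht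
    rw [← integral_add (i2 x hx v hv t ht) (i3 x hx v hv t ht)]
    refine (hasDerivAt_integral_of_dominated_loc_of_deriv_le (bound := fun _ => M * M + M * M)
      (F := fun y v' => p y v v' * u y v' t)
      (F' := fun x v' => deriv (fun y => p y v v') x * u x v' t
        + p x v v' * deriv (fun y => u y v' t) x)
      (isOpen_Ioo.mem_nhds hx) ?_ (i1 x hx v hv t ht) ?_ ?_ (integrable_const _) ?_).2
    · exact Filter.Eventually.of_forall
        (fun r => ((mp r v).mul (mu r t)).aestronglyMeasurable)
    · exact ((i2 x hx v hv t ht).add (i3 x hx v hv t ht)).aestronglyMeasurable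
    · filter_upwards [hν_mem] with v' hv' r hr
      exact (norm_add_le _ _).trans (add_le_add
        (bmul (bpx r hr v hv v' hv') (bu r hr v' hv' t ht))
        (bmul (bp r hr v hv v' hv') (bux r hr v' hv' t ht)))
    · filter_upwards [hν_mem] with v' hv' r hr
      exact (hpd r hr v hv v' hv').mul (hfacts v' hv' r hr t ht).2.1
  -- Step C: continuity and bound of ∫ p u_t
  have hCc : ∀ x ∈ Set.Ioo 0 ℓ, ∀ v ∈ V, ContinuousOn
      (fun t => ∫ v', p x v v' * deriv (fun τ => u x v' τ) t ∂ν) (Set.Ioo 0 T) := by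
    intro x hx v hv
    apply continuousOn_of_dominated (bound := fun _ => M * M)
    · intro t ht
      exact (mp x v).aestronglyMeasurable.mul (mut1 x hx t ht)
    · intro t ht
      filter_upwards [hν_mem] with v' hv'
      exact bmul (bp x hx v hv v' hv') (but x hx v' hv' t ht)
    · exact integrable_const _
    · filter_upwards [hν_mem] with v' hv'
      intro t ht
      exact (continuousAt_const.mul (hfacts v' hv' x hx t ht).2.2.2.2.2).continuousWithinAt
  have hCb : ∀ x ∈ Set.Ioo 0 ℓ, ∀ v ∈ V, ∀ t ∈ Set.Ioo 0 T,
      |∫ v', p x v v' * deriv (fun τ => u x v' τ) t ∂ν| ≤ M * M * ν.real Set.univ := by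
    intro x hx v hv t ht
    rw [← Real.norm_eq_abs]
    apply norm_integral_le_of_norm_le_const
    filter_upwards [hν_mem] with v' hv'
    exact bmul (bp x hx v hv v' hv') (but x hx v' hv' t ht)
  have huxt_c : ∀ x ∈ Set.Ioo 0 ℓ, ∀ v ∈ V,
      ContinuousOn (fun t => deriv (fun y => deriv (fun τ => u y v τ) t) x) (Set.Ioo 0 T) := by
    intro x hx v hv
    exact (hu_mixed v hv).1.comp (f := fun t : ℝ => (x, t)) (by fun_prop)
      (fun t ht => ⟨io x hx, ioT t ht⟩)
  have huxt_b : ∀ x ∈ Set.Ioo 0 ℓ, ∀ v ∈ V, ∀ t ∈ Set.Ioo 0 T,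
      |deriv (fun y => deriv (fun τ => u y v τ) t) x| ≤ M := fun x hx v hv t ht =>
    (hu_mixed v hv).2 x (io x hx) t (ioT t ht)
  have hut_c : ∀ x ∈ Set.Ioo 0 ℓ, ∀ v ∈ V,
      ContinuousOn (deriv (fun τ => u x v τ)) (Set.Ioo 0 T) := by
    intro x hx v hv t ht
    exact (hfacts v hv x hx t ht).2.2.2.2.2.continuousWithinAt
  have hcap : ∀ x v t, t ∈ Set.Ioo 0 T →
      caputoHalf (fun τ => u x v τ) t = c * Ih T (deriv (fun τ => u x v τ)) t :=
    fun x v t ht => caputo_eq T t ht.2.le _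
  -- Step F: derivative of the Caputo derivative in x
  have hF1 : ∀ x ∈ Set.Ioo 0 ℓ, ∀ v ∈ V, ∀ t ∈ Set.Ioo 0 T,
      HasDerivAt (fun y => caputoHalf (fun τ => u y v τ) t)
        (c * Ih T (fun τ => deriv (fun y => deriv (fun τ => u y v τ) τ) x) t) x := by
    intro x hx v hv t ht
    have e : (fun y => caputoHalf (fun τ => u y v τ) t)
        = fun y => c * Ih T (deriv (fun τ => u y v τ)) t := by
      funext y; exact hcap y v t ht
    rw [e]
    apply HasDerivAt.const_mul
    have wi : Integrable (fun τ => (Real.sqrt (t - τ))⁻¹) μ := w_int T t ht.1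
    refine (hasDerivAt_integral_of_dominated_loc_of_deriv_le
      (bound := fun τ => M * (Real.sqrt (t - τ))⁻¹)
      (F := fun y τ => deriv (fun τ => u y v τ) τ * (Real.sqrt (t - τ))⁻¹)
      (F' := fun x τ => deriv (fun y => deriv (fun τ => u y v τ) τ) x * (Real.sqrt (t - τ))⁻¹)
      (isOpen_Ioo.mem_nhds hx) ?_ ?_ ?_ ?_ (wi.const_mul M) ?_).2
    · filter_upwards [isOpen_Ioo.mem_nhds hx] with y hy
      exact ((hut_c y hy v hv).aestronglyMeasurable measurableSet_Ioo).mul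
        wi.aestronglyMeasurable
    · apply wi.bdd_mul (c := M) ((hut_c x hx v hv).aestronglyMeasurable measurableSet_Ioo)
      filter_upwards [hμ_mem] with τ hτ
      exact but x hx v hv τ hτ
    · exact ((huxt_c x hx v hv).aestronglyMeasurable measurableSet_Ioo).mul
        wi.aestronglyMeasurable
    · filter_upwards [hμ_mem] with τ hτ y hy
      rw [norm_mul, Real.norm_of_nonneg (r := (Real.sqrt (t - τ))⁻¹) (by positivity)]
      exact mul_le_mul_of_nonneg_right (huxt_b y hy v hv τ hτ) (by positivity)
    · filter_upwards [hμ_mem] with τ hτ y hy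
      exact (hfacts v hv y hy τ hτ).2.2.2.1.mul_const _
  -- the equation, solved for the Caputo derivative
  have hE : ∀ x ∈ Set.Ioo 0 ℓ, ∀ v ∈ V, ∀ t ∈ Set.Ioo 0 T,
      caputoHalf (fun τ => u x v τ) t = -v * deriv (fun y => u y v t) x - σt x v * u x v t
        + σs x v * (∫ v', p x v v' * u x v' t ∂ν) + F x v t := by
    intro x hx v hv t ht
    have := hPDE x hx v hv t ht
    linarith
  intro x hx v hv t ht
  -- Step G: conclusion
  have hGx : c * Ih T (fun τ => deriv (fun y => deriv (fun τ => u y v τ) τ) x) t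
      = -v * deriv (deriv (fun y => u y v t)) x
        - (deriv (fun y => σt y v) x * u x v t + σt x v * deriv (fun y => u y v t) x)
        + (deriv (fun y => σs y v) x * (∫ v', p x v v' * u x v' t ∂ν)
          + σs x v * ((∫ v', deriv (fun y => p y v v') x * u x v' t ∂ν)
          + ∫ v', p x v v' * deriv (fun y => u y v' t) x ∂ν))
        + deriv (fun y => F y v t) x := by
    apply (hF1 x hx v hv t ht).unique
    have h := (((((hfacts v hv x hx t ht).2.2.1.const_mul (-v)).sub
      ((hσtd x hx v hv).mul (hfacts v hv x hx t ht).2.1)).add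
      ((hσsd x hx v hv).mul (hG x hx v hv t ht))).add (hFfacts v hv x hx t ht).2)
    apply h.congr_of_eventuallyEq
    filter_upwards [isOpen_Ioo.mem_nhds hx] with y hy
    exact hE y hy v hv t ht
  -- Step B: time derivative of the Caputo derivative
  set k : ℝ → ℝ := fun r => -v * deriv (fun y => deriv (fun τ => u y v τ) r) x
    - σt x v * deriv (fun τ => u x v τ) r
    + σs x v * (∫ v', p x v v' * deriv (fun τ => u x v' τ) r ∂ν)
    + deriv (fun τ => F x v τ) r with hk
  have hkd : ∀ r ∈ Set.Ioo 0 T,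
      HasDerivAt (fun r => caputoHalf (fun τ => u x v τ) r) (k r) r := by
    intro r hr
    have h := (((((hfacts v hv x hx r hr).2.2.2.2.1.const_mul (-v)).sub
      ((hfacts v hv x hx r hr).1.const_mul (σt x v))).add
      ((hB x hx v hv r hr).const_mul (σs x v))).add (hFfacts v hv x hx r hr).1)
    apply h.congr_of_eventuallyEq
    filter_upwards [isOpen_Ioo.mem_nhds hr] with y hy
    exact hE x hx v hv y hy
  obtain ⟨hFtc, CF, hCF⟩ := hFt v hv x hx
  have hkc : ContinuousOn k (Set.Ioo 0 T) :=
    (((continuousOn_const.mul (huxt_c x hx v hv)).sub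
      (continuousOn_const.mul (hut_c x hx v hv))).add
      (continuousOn_const.mul (hCc x hx v hv))).add hFtc
  have hkb : ∀ r ∈ Set.Ioo 0 T, |k r| ≤
      |-v| * M + |σt x v| * M + |σs x v| * (M * M * ν.real Set.univ) + CF := by
    intro r hr
    refine (abs_add_le _ _).trans (add_le_add ((abs_add_le _ _).trans (add_le_add
      ((abs_sub _ _).trans (add_le_add ?_ ?_)) ?_)) ?_)
    · exact bmul le_rfl (huxt_b x hx v hv r hr)
    · exact bmul le_rfl (but x hx v hv r hr)
    · exact bmul le_rfl (hCb x hx v hv r hr)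
    · exact hCF r hr
  -- Step D: Abel inversion
  have hD : deriv (fun τ => u x v τ) t = c * Ih T k t := by
    refine abel T (deriv (fun τ => u x v τ)) k
      (max M (|-v| * M + |σt x v| * M + |σs x v| * (M * M * ν.real Set.univ) + CF))
      (hut_c x hx v hv) hkc (fun r hr => (but x hx v hv r hr).trans (le_max_left _ _))
      (fun r hr => (hkb r hr).trans (le_max_right _ _)) ?_ t ht
    intro r hr
    rw [← hc, ← hcap x v r hr, (hu_caputoAC x (io x hx) v hv).2 r (ioT r hr)]
    apply setIntegral_congr_fun measurableSet_Ioo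
    intro s hs
    exact (hkd s ⟨hs.1, hs.2.trans hr.2⟩).deriv
  -- Step E: linearity and Fubini
  have wi : Integrable (fun τ => (Real.sqrt (t - τ))⁻¹) μ := w_int T t ht.1
  have hfub_i : Integrable (fun q : ℝ × ℝ =>
      (p x v q.2 * deriv (fun τ => u x q.2 τ) q.1) * (Real.sqrt (t - q.1))⁻¹) (μ.prod ν) := by
    have h0 : Integrable (fun q : ℝ × ℝ => (Real.sqrt (t - q.1))⁻¹) (μ.prod ν) := wi.comp_fst ν
    apply h0.bdd_mul (c := M * M)
    · exact ((mp x v).comp measurable_snd).aestronglyMeasurable.mul (mutt x hx)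
    · filter_upwards [hμν_mem] with q hq
      exact bmul (bp x hx v hv q.2 hq.2) (but x hx q.2 hq.2 q.1 hq.1)
  have hfub : Ih T (fun r => ∫ v', p x v v' * deriv (fun τ => u x v' τ) r ∂ν) t
      = ∫ v', p x v v' * Ih T (deriv (fun τ => u x v' τ)) t ∂ν := by
    have e1 : Ih T (fun r => ∫ v', p x v v' * deriv (fun τ => u x v' τ) r ∂ν) t
        = ∫ r, ∫ v', (p x v v' * deriv (fun τ => u x v' τ) r) * (Real.sqrt (t - r))⁻¹ ∂ν ∂μ := by
      unfold Ih
      congr 1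
      funext r
      rw [integral_mul_const]
    rw [e1, integral_integral_swap
      (f := fun r v' => (p x v v' * deriv (fun τ => u x v' τ) r) * (Real.sqrt (t - r))⁻¹) hfub_i]
    congr 1
    funext v'
    unfold Ih
    rw [← integral_const_mul]
    congr 1
    funext r
    ring
  have hlin : Ih T k t = -v * Ih T (fun τ => deriv (fun y => deriv (fun τ => u y v τ) τ) x) t
      - σt x v * Ih T (deriv (fun τ => u x v τ)) t
      + σs x v * (∫ v', p x v v' * Ih T (deriv (fun τ => u x v' τ)) t ∂ν)
      + Ih T (deriv (fun τ => F x v τ)) t := by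
    rw [← hfub]
    have bi : ∀ f : ℝ → ℝ, ∀ C : ℝ, ContinuousOn f (Set.Ioo 0 T) →
        (∀ r ∈ Set.Ioo 0 T, |f r| ≤ C) →
        Integrable (fun τ => f τ * (Real.sqrt (t - τ))⁻¹) μ := by
      intro f C hf hb
      apply wi.bdd_mul (c := C) (hf.aestronglyMeasurable measurableSet_Ioo)
      filter_upwards [hμ_mem] with τ hτ
      exact hb τ hτ
    have j1 := bi _ M (huxt_c x hx v hv) (huxt_b x hx v hv)
    have j2 := bi _ M (hut_c x hx v hv) (but x hx v hv)
    have j3 := bi _ _ (hCc x hx v hv) (hCb x hx v hv)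
    have j4 := bi _ CF hFtc hCF
    have hl := (lin4 j1 j2 j3 j4 (-v) (-σt x v) (σs x v) 1).2
    have e : Ih T k t = ∫ r, (-v * (deriv (fun y => deriv (fun τ => u y v τ) r) x
          * (Real.sqrt (t - r))⁻¹)
        + -σt x v * (deriv (fun τ => u x v τ) r * (Real.sqrt (t - r))⁻¹)
        + σs x v * ((∫ v', p x v v' * deriv (fun τ => u x v' τ) r ∂ν) * (Real.sqrt (t - r))⁻¹)
        + 1 * (deriv (fun τ => F x v τ) r * (Real.sqrt (t - r))⁻¹)) ∂μ := by
      unfold Ih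
      congr 1
      funext r
      simp only [hk]
      ring
    rw [e, hl]
    unfold Ih
    ring
  -- Step H: expand ∫ p (∂ₜ^{1/2} u)
  have i4 : Integrable (fun v' => p x v v' * (v' * deriv (fun y => u y v' t) x)) ν := by
    apply Integrable.of_bound ((mp x v).aestronglyMeasurable.mul
      (measurable_id.aestronglyMeasurable.mul (mux x hx t ht))) (M * (v₁ * M))
    filter_upwards [hν_mem] with v' hv'
    exact bmul (bp x hx v hv v' hv') (bmul (Vset_abs v₀ v₁ v' hv₀ hv') (bux x hx v' hv' t ht))
  have i5 : Integrable (fun v' => p x v v' * (σt x v' * u x v' t)) ν := by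
    apply Integrable.of_bound ((mp x v).mul ((mσt x).mul (mu x t))).aestronglyMeasurable
      (M * (M * M))
    filter_upwards [hν_mem] with v' hv'
    exact bmul (bp x hx v hv v' hv') (bmul (bσt x hx v' hv') (bu x hx v' hv' t ht))
  have i6 : Integrable (fun q : ℝ × ℝ => p x v q.1 * (σs x q.1 * (p x q.1 q.2 * u x q.2 t)))
      (ν.prod ν) := by
    apply Integrable.of_bound _ (M * (M * (M * M)))
    · filter_upwards [hνν_mem] with q hq
      exact bmul (bp x hx v hv q.1 hq.1) (bmul (bσs x hx q.1 hq.1)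
        (bmul (bp x hx q.1 hq.1 q.2 hq.2) (bu x hx q.2 hq.2 t ht)))
    · exact (((mp x v).comp measurable_fst).mul (((mσs x).comp measurable_fst).mul
        ((mp' x).mul ((mu x t).comp measurable_snd)))).aestronglyMeasurable
  have i6a : Integrable (fun v' => p x v v' * (σs x v' * ∫ v'', p x v' v'' * u x v'' t ∂ν)) ν := by
    have := i6.integral_prod_left
    simpa only [integral_const_mul] using this
  have e6b : ∀ v', ∫ v'', p x v v'' * (σs x v'' * (p x v'' v' * u x v' t)) ∂ν
      = u x v' t * ∫ v'', σs x v'' * p x v v'' * p x v'' v' ∂ν := by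
    intro v'
    rw [← integral_const_mul]
    congr 1
    funext v''
    ring
  have i6b : Integrable (fun v' => u x v' t * ∫ v'', σs x v'' * p x v v'' * p x v'' v' ∂ν) ν := by
    have := i6.integral_prod_right
    simpa only [e6b] using this
  have e6 : ∫ v', p x v v' * (σs x v' * ∫ v'', p x v' v'' * u x v'' t ∂ν) ∂ν
      = ∫ v', u x v' t * ∫ v'', σs x v'' * p x v v'' * p x v'' v' ∂ν ∂ν := by
    have := integral_integral_swap
      (f := fun a b => p x v a * (σs x a * (p x a b * u x b t))) i6
    simpa only [integral_const_mul, e6b] using this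
  have i7 : Integrable (fun v' => p x v v' * F x v' t) ν := by
    apply Integrable.of_bound ((mp x v).mul (mF x t)).aestronglyMeasurable
      (M * (|c| * (M * (2 * Real.sqrt T)) + v₁ * M + M * M + M * (M * M * ν.real Set.univ)))
    filter_upwards [hν_mem] with v' hv'
    apply bmul (bp x hx v hv v' hv')
    have h1 : F x v' t = c * Ih T (deriv (fun τ => u x v' τ)) t
        + v' * deriv (fun y => u y v' t) x + σt x v' * u x v' t
        - σs x v' * (∫ v'', p x v' v'' * u x v'' t ∂ν) := by
      rw [← hcap x v' t ht, hE x hx v' hv' t ht]; ring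
    beta_reduce
    rw [h1]
    refine (abs_sub _ _).trans (add_le_add ((abs_add_le _ _).trans (add_le_add
      ((abs_add_le _ _).trans (add_le_add ?_ ?_)) ?_)) ?_)
    · exact bmul le_rfl (Ih_bdd T _ M (but x hx v' hv') t ht)
    · exact bmul (Vset_abs v₀ v₁ v' hv₀ hv') (bux x hx v' hv' t ht)
    · exact bmul (bσt x hx v' hv') (bu x hx v' hv' t ht)
    · apply bmul (bσs x hx v' hv')
      rw [← Real.norm_eq_abs]
      apply norm_integral_le_of_norm_le_const
      filter_upwards [hν_mem] with v'' hv''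
      exact bmul (bp x hx v' hv' v'' hv'') (bu x hx v'' hv'' t ht)
  have hH : c * (∫ v', p x v v' * Ih T (deriv (fun τ => u x v' τ)) t ∂ν)
      = -(∫ v', p x v v' * (v' * deriv (fun y => u y v' t) x) ∂ν)
        - (∫ v', p x v v' * (σt x v' * u x v' t) ∂ν)
        + (∫ v', u x v' t * ∫ v'', σs x v'' * p x v v'' * p x v'' v' ∂ν ∂ν)
        + ∫ v', p x v v' * F x v' t ∂ν := by
    have hl := (lin4 i4 i5 i6a i7 (-1) (-1) 1 1).2
    rw [e6] at hl
    have e : c * (∫ v', p x v v' * Ih T (deriv (fun τ => u x v' τ)) t ∂ν)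
        = ∫ v', (-1 * (p x v v' * (v' * deriv (fun y => u y v' t) x))
          + -1 * (p x v v' * (σt x v' * u x v' t))
          + 1 * (p x v v' * (σs x v' * ∫ v'', p x v' v'' * u x v'' t ∂ν))
          + 1 * (p x v v' * F x v' t)) ∂ν := by
      rw [← integral_const_mul]
      apply integral_congr_ae
      filter_upwards [hν_mem] with v' hv'
      have h1 := hE x hx v' hv' t ht
      rw [hcap x v' t ht] at h1
      linear_combination (p x v v') * h1
    rw [e, hl]
    ring
  have hK : (∫ v' in V,
              (-(v * deriv (fun y => σs y v * p y v v') x) * u x v' t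
                - σs x v * p x v v' *
                    ((v + v') * deriv (fun y => u y v' t) x
                      + (σt x v + σt x v') * u x v' t)
                + σs x v * u x v' t *
                    ∫ v'' in V, σs x v'' * p x v v'' * p x v'' v'))
      = (-(v * deriv (fun y => σs y v) x + σs x v * σt x v)) * (∫ v', p x v v' * u x v' t ∂ν)
        + (-(v * σs x v)) * (∫ v', deriv (fun y => p y v v') x * u x v' t ∂ν)
        + (-(v * σs x v)) * (∫ v', p x v v' * deriv (fun y => u y v' t) x ∂ν)
        + (-σs x v) * (∫ v', p x v v' * (v' * deriv (fun y => u y v' t) x) ∂ν)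
        + (-σs x v) * (∫ v', p x v v' * (σt x v' * u x v' t) ∂ν)
        + σs x v * (∫ v', u x v' t * ∫ v'', σs x v'' * p x v v'' * p x v'' v' ∂ν ∂ν) := by
    rw [← lin6 (i1 x hx v hv t ht) (i2 x hx v hv t ht) (i3 x hx v hv t ht) i4 i5 i6b]
    apply integral_congr_ae
    filter_upwards [hν_mem] with v' hv'
    have hd := ((hσsd x hx v hv).mul (hpd x hx v hv v' hv')).deriv
    have hd' : deriv (fun y => σs y v * p y v v') x
      = deriv (fun y => σs y v) x * p x v v' + σs x v * deriv (fun y => p y v v') x := hd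
    rw [hd']
    ring
  have hcapF : caputoHalf (fun τ => F x v τ) t = c * Ih T (deriv (fun τ => F x v τ)) t :=
    caputo_eq T t ht.2.le _
  have hEv := hE x hx v hv t ht
  rw [hcap x v t ht] at hEv
  rw [hK, hD, hlin, hcapF]
  linear_combination (-v) * hGx - σt x v * hEv + σs x v * hH
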